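/- arXiv:1409.0726 — 2 statements merged into one kernel-verified Lean document; each statement's English description precedes it below -/
import Mathlib

section
/- Let G be a bounded simply connected domain in ℂ and let z₀ ∈ ∂G be an inward-corner (IC) point of G, i.e., there exist r > 0 and real numbers α < β with β − α > 1 such that the closure of the circular sector S := {z : 0 < |z−z₀| < r, απ < arg(z−z₀) < βπ} is contained in G ∪ {z₀}. Then z₀ is an NCS point of G: there is a closed disk D̄ with z₀ on its boundary circle and D̄∖{z₀} ⊂ G, and a line segment L from a point ζ₀ in the interior of D̄ to z₀ along which g_G(z,ζ₀)/|z−z₀| → +∞ as z → z₀. -/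
open MeasureTheory Filter Metric Set Polynomial Topology
open scoped ENNReal Classical

noncomputable section

/-- The normalized zero counting measure of a polynomial. -/
noncomputable def zeroMeasure (p : Polynomial ℂ) : Measure ℂ :=
  ((p.natDegree : ℝ≥0∞))⁻¹ • (p.roots.map (fun z => (Measure.dirac z : Measure ℂ))).sum

/-- Weak-star convergence of a sequence of measures along a filter: integrals of continuous
functions with compact support converge. -/
def WeakStarTo (μ : ℕ → Measure ℂ) (l : Filter ℕ) (ν : Measure ℂ) : Prop :=
  ∀ f : ℂ → ℝ, Continuous f → HasCompactSupport f →
    Tendsto (fun n => ∫ z, f z ∂(μ n)) l (𝓝 (∫ z, f z ∂ν))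

/-- The logarithmic potential of a measure. -/
noncomputable def logPotential (μ : Measure ℂ) (z : ℂ) : ℝ :=
  ∫ t, Real.log (1 / dist z t) ∂μ

/-- The logarithmic energy of a measure. -/
noncomputable def logEnergy (μ : Measure ℂ) : ℝ :=
  ∫ z, ∫ t, Real.log (1 / dist z t) ∂μ ∂μ

/-- The logarithmic kernel is integrable for the product measure. -/
def HasFiniteEnergy (μ : Measure ℂ) : Prop :=
  Integrable (fun p : ℂ × ℂ => Real.log (1 / dist p.1 p.2)) (μ.prod μ)

/-- The set of energies of probability measures of finite energy supported on `E`. -/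
def energies (E : Set ℂ) : Set ℝ :=
  {I | ∃ μ : Measure ℂ, IsProbabilityMeasure μ ∧ μ Eᶜ = 0 ∧ HasFiniteEnergy μ ∧ I = logEnergy μ}

/-- The logarithmic capacity of `E`: `exp(-V_E)` where `V_E` is the minimal energy, and `0`
if no probability measure on `E` has finite energy. -/
noncomputable def logCap (E : Set ℂ) : ℝ :=
  if (energies E).Nonempty then Real.exp (-sInf (energies E)) else 0

/-- `μ` is an equilibrium measure of `E`: an energy-minimizing probability measure on `E`. -/
def IsEquilibriumMeasure (E : Set ℂ) (μ : Measure ℂ) : Prop :=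
  IsProbabilityMeasure μ ∧ μ Eᶜ = 0 ∧ HasFiniteEnergy μ ∧ logEnergy μ = sInf (energies E)

/-- The sup norm of a polynomial on a set. -/
noncomputable def supNorm (E : Set ℂ) (p : Polynomial ℂ) : ℝ :=
  sSup ((fun z => ‖p.eval z‖) '' E)

/-- The unbounded connected component `Ω` of the complement of `E` (the points of the
complement whose connected component in the complement is unbounded). -/
def outerDomain (E : Set ℂ) : Set ℂ :=
  {z | z ∉ E ∧ ¬ Bornology.IsBounded (connectedComponentIn Eᶜ z)}

/-- A sequence of monic polynomials `P k` of respective degrees `N k`, indexed by an increasing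
sequence `N` of positive integers, is asymptotically extremal on `E` if
`limsup ‖P k‖_E^(1/N k) ≤ cap E`. -/
def AsymptoticallyExtremal (E : Set ℂ) (N : ℕ → ℕ) (P : ℕ → Polynomial ℂ) : Prop :=
  StrictMono N ∧ (∀ k, 0 < N k) ∧ (∀ k, (P k).Monic) ∧ (∀ k, (P k).natDegree = N k) ∧
    Filter.limsup (fun k => supNorm E (P k) ^ ((N k : ℝ)⁻¹)) atTop ≤ logCap E

/-- A function is harmonic on a planar set if it is locally the real part of an
analytic function. -/
def HarmonicOnPlane (u : ℂ → ℝ) (s : Set ℂ) : Prop :=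
  ∀ z ∈ s, ∃ ε > 0, Metric.ball z ε ⊆ s ∧ ∃ f : ℂ → ℂ,
    AnalyticOnNhd ℂ f (Metric.ball z ε) ∧ ∀ w ∈ Metric.ball z ε, u w = (f w).re

/-- `g` is the Green function of `G` with pole at `ζ`: harmonic and positive on `G ∖ {ζ}`,
`g(z) + log|z-ζ|` bounded near `ζ`, and `g → 0` at every boundary point of `G`. -/
structure IsGreenFunction (G : Set ℂ) (ζ : ℂ) (g : ℂ → ℝ) : Prop where
  harmonic : HarmonicOnPlane g (G \ {ζ})
  pos : ∀ z ∈ G \ {ζ}, 0 < g z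
  logBounded : ∃ C : ℝ, ∀ᶠ z in 𝓝[G \ {ζ}] ζ, |g z + Real.log (dist z ζ)| ≤ C
  boundaryLimit : ∀ t ∈ frontier G, Tendsto g (𝓝[G] t) (𝓝 0)

/-- `z₀` is a non-convex type singularity (NCS) point of `G`: a boundary point of `G`
carrying a closed disk `D̄ ⊆ G ∪ {z₀}` with `z₀` on its circumference, and a segment `L`
from a point `ζ₀` of the open disk to `z₀` along which `g_G(z,ζ₀)/|z-z₀| → +∞`. -/
def IsNCSPoint (G : Set ℂ) (z₀ : ℂ) : Prop :=
  z₀ ∈ frontier G ∧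
    ∃ c : ℂ, ∃ r : ℝ, 0 < r ∧ dist z₀ c = r ∧ Metric.closedBall c r \ {z₀} ⊆ G ∧
      ∃ ζ₀ ∈ Metric.ball c r, ∀ g : ℂ → ℝ, IsGreenFunction G ζ₀ g →
        Tendsto (fun z => g z / dist z z₀) (𝓝[segment ℝ ζ₀ z₀ \ {z₀}] z₀) atTop

end

/-!
Mapping the sector `|arg w| < a` onto a half-plane by `w ↦ w ^ (π / (2a))` shows that
`Re (w ^ (π / (2a)))` is a positive harmonic function on it that vanishes on its two sides. By the
minimum principle a small multiple of it bounds from below any harmonic function on a circular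
sector of the same opening that is continuous on the closure, nonnegative, and positive on the arc.
The Green function `g` of `G` is such a function on a sector at an inward corner `z₀`, and there the
opening `2a` can be taken larger than `π`; so along the bisector `g` is at least `ε |z - z₀| ^ p`
with `p = π / (2a) < 1`, and `g / |z - z₀|` blows up. The disk is a small one tangent at `z₀` to the
normal of the bisector: it lies in a half-plane, hence in a sector of opening larger than `π`.
-/

open InnerProductSpace

section Harmonic

variable {u : ℂ → ℝ} {z : ℂ} {U : Set ℂ}

theorem harmonicAt_iff_exists_analyticAt :
    HarmonicAt u z ↔ ∃ f : ℂ → ℂ, AnalyticAt ℂ f z ∧ u =ᶠ[𝓝 z] fun w ↦ (f w).re := by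
  constructor
  · intro hu
    obtain ⟨R, hR, hball⟩ := isOpen_iff.1 (isOpen_setOfPred_harmonicAt u) z hu
    obtain ⟨f, hf, hfu⟩ := HarmonicOnNhd.exists_analyticOnNhd_ball_re_eq hball
    exact ⟨f, hf z (mem_ball_self hR), (hfu.eventuallyEq_of_mem (ball_mem_nhds z hR)).symm⟩
  · rintro ⟨f, hf, hfu⟩
    exact (harmonicAt_congr_nhds hfu).2 hf.harmonicAt_re

theorem HarmonicOnPlane.harmonicOnNhd (hu : HarmonicOnPlane u U) : HarmonicOnNhd u U := by
  intro z hz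
  obtain ⟨R, hR, -, f, hf, hfu⟩ := hu z hz
  exact harmonicAt_iff_exists_analyticAt.2
    ⟨f, hf z (mem_ball_self hR), eventually_of_mem (ball_mem_nhds z hR) hfu⟩

theorem harmonicAt_comp_of_analyticAt {φ : ℂ → ℂ} (hu : HarmonicAt u (φ z))
    (hφ : AnalyticAt ℂ φ z) : HarmonicAt (u ∘ φ) z := by
  obtain ⟨f, hf, hfu⟩ := harmonicAt_iff_exists_analyticAt.1 hu
  exact harmonicAt_iff_exists_analyticAt.2
    ⟨f ∘ φ, hf.comp hφ, hφ.continuousAt.eventually hfu⟩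

theorem eventually_eq_of_isLocalMin_of_harmonicAt (hu : HarmonicAt u z) (hmin : IsLocalMin u z) :
    ∀ᶠ w in 𝓝 z, u w = u z := by
  obtain ⟨f, hf, hfu⟩ := harmonicAt_iff_exists_analyticAt.1 hu
  have hnorm : ∀ᶠ w in 𝓝 z, ‖Complex.exp (-f w)‖ = Real.exp (-u w) := by
    filter_upwards [hfu] with w hw
    rw [Complex.norm_exp, Complex.neg_re, hw]
  have hdiff : ∀ᶠ w in 𝓝 z, DifferentiableAt ℂ (fun w ↦ Complex.exp (-f w)) w :=
    hf.eventually_analyticAt.mono fun w hw ↦ hw.differentiableAt.neg.cexp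
  have hmax : IsLocalMax (norm ∘ fun w ↦ Complex.exp (-f w)) z := by
    filter_upwards [hmin, hnorm] with w hw hwn
    rw [Function.comp_apply, Function.comp_apply, hwn, hnorm.self_of_nhds]
    gcongr
  filter_upwards [Complex.eventually_eq_of_isLocalMax_norm hdiff hmax, hnorm] with w hw hwn
  rw [hw, hnorm.self_of_nhds] at hwn
  linarith [Real.exp_injective hwn]

theorem nonneg_of_forall_mem_frontier_nonneg (hU : Bornology.IsBounded U)
    (hu : HarmonicContOnCl u U) (hfr : ∀ w ∈ frontier U, 0 ≤ u w) (hz : z ∈ closure U) :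
    0 ≤ u z := by
  by_contra! hneg
  have hK : IsCompact (closure U) := hU.isCompact_closure
  obtain ⟨x, hx, hxmin⟩ := hK.exists_isMinOn ⟨z, hz⟩ hu.continuousOn
  -- The minimizers form a nonempty clopen subset of `ℂ`, hence all of `ℂ`, which is not compact.
  set M : Set ℂ := closure U ∩ u ⁻¹' {u x}
  have hMclosed : IsClosed M :=
    hu.continuousOn.preimage_isClosed_of_isClosed isClosed_closure isClosed_singleton
  have hMint : M ⊆ interior U := by
    rintro w ⟨hw, hwx : u w = u x⟩
    by_contra hwint
    linarith [hfr w ⟨hw, hwint⟩, isMinOn_iff.1 hxmin z hz]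
  have hMopen : IsOpen M := by
    refine isOpen_iff_mem_nhds.2 fun w hw ↦ ?_
    have hwx : u w = u x := hw.2
    have hcl : closure U ∈ 𝓝 w := mem_of_superset (mem_interior_iff_mem_nhds.1 (hMint hw))
      subset_closure
    have hwmin : IsLocalMin u w := by
      filter_upwards [hcl] with y hy
      exact hwx.trans_le (hxmin hy)
    filter_upwards [hcl, eventually_eq_of_isLocalMin_of_harmonicAt
      (hu.harmonicOnNhd w (interior_subset (hMint hw))) hwmin] with y hy hyw
    exact ⟨hy, hyw.trans hwx⟩
  have hMuniv : M = univ := IsClopen.eq_univ ⟨hMclosed, hMopen⟩ ⟨x, hx, rfl⟩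
  exact noncompact_univ ℂ (hMuniv ▸ hK.of_isClosed_subset hMclosed inter_subset_left)

end Harmonic

section Sector

/-- The open circular sector of radius `ρ` with vertex `0` and half-opening `a ∈ [0, π]` about the
positive real axis. The condition `|arg w| < a` is written as `‖w‖ * cos a < re w`, which is open in
`w` and excludes `w = 0` despite the convention `arg 0 = 0`. -/
def symmSector (a ρ : ℝ) : Set ℂ :=
  {w | ‖w‖ < ρ ∧ ‖w‖ * Real.cos a < w.re}

variable {a ρ p : ℝ} {w : ℂ}

theorem isOpen_symmSector : IsOpen (symmSector a ρ) :=
  (isOpen_lt continuous_norm continuous_const).inter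
    (isOpen_lt (by fun_prop) Complex.continuous_re)

theorem isBounded_symmSector : Bornology.IsBounded (symmSector a ρ) :=
  isBounded_ball.subset fun _ hw ↦ mem_ball_zero_iff.2 hw.1

theorem closure_symmSector_subset :
    closure (symmSector a ρ) ⊆ {w | ‖w‖ ≤ ρ ∧ ‖w‖ * Real.cos a ≤ w.re} :=
  closure_minimal (fun _ hw ↦ ⟨hw.1.le, hw.2.le⟩)
    ((isClosed_le continuous_norm continuous_const).inter
      (isClosed_le (by fun_prop) Complex.continuous_re))

theorem ne_zero_of_mem_symmSector (hw : w ∈ symmSector a ρ) : w ≠ 0 := by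
  rintro rfl
  simpa using hw.2

theorem abs_arg_lt_of_mem_symmSector (ha : a ∈ Icc 0 Real.pi) (hw : w ∈ symmSector a ρ) :
    |w.arg| < a := by
  have hcos : Real.cos a < Real.cos |w.arg| := by
    have h := hw.2
    rw [← Complex.norm_mul_cos_arg] at h
    rw [Real.cos_abs]
    exact lt_of_mul_lt_mul_left h (norm_nonneg w)
  exact (Real.strictAntiOn_cos.lt_iff_gt ha ⟨abs_nonneg _, Complex.abs_arg_le_pi w⟩).1 hcos

theorem closure_symmSector_sdiff_zero_subset {b R : ℝ} (ha : 0 ≤ a) (hab : a < b)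
    (hb : b ≤ Real.pi) (hρR : ρ < R) : closure (symmSector a ρ) \ {0} ⊆ symmSector b R := by
  rintro w ⟨hw, hw0⟩
  obtain ⟨hwρ, hwa⟩ := closure_symmSector_subset hw
  have hcos : Real.cos b < Real.cos a := Real.cos_lt_cos_of_nonneg_of_le_pi ha hb hab
  have hnorm : 0 < ‖w‖ := norm_pos_iff.2 hw0
  exact ⟨hwρ.trans_lt hρR, (mul_lt_mul_of_pos_left hcos hnorm).trans_le hwa⟩

theorem closedBall_one_sdiff_zero_subset_symmSector (ha : a ∈ Icc (Real.pi / 2) Real.pi)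
    (hρ : 2 < ρ) : closedBall 1 1 \ {0} ⊆ symmSector a ρ := by
  rintro w ⟨hw, hw0⟩
  rw [mem_closedBall, dist_eq_norm] at hw
  have hnorm : 0 < ‖w‖ := norm_pos_iff.2 hw0
  have hre : 0 < w.re := by
    have hsq : ‖w - 1‖ ^ 2 = ‖w‖ ^ 2 - 2 * w.re + 1 := by
      simp only [Complex.sq_norm, Complex.normSq_apply, Complex.sub_re, Complex.sub_im,
        Complex.one_re, Complex.one_im]
      ring
    nlinarith [norm_nonneg (w - 1)]
  have hcos : Real.cos a ≤ 0 :=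
    Real.cos_nonpos_of_pi_div_two_le_of_le ha.1 (by linarith [ha.2, Real.pi_pos])
  refine ⟨?_, (mul_nonpos_of_nonneg_of_nonpos hnorm.le hcos).trans_lt hre⟩
  calc ‖w‖ ≤ ‖w - 1‖ + ‖(1 : ℂ)‖ := norm_le_norm_sub_add w 1
    _ < ρ := by rw [norm_one]; linarith

theorem mem_slitPlane_of_norm_mul_cos_le (ha : a ∈ Ico 0 Real.pi) (hw0 : w ≠ 0)
    (hw : ‖w‖ * Real.cos a ≤ w.re) : w ∈ Complex.slitPlane := by
  have hcos : -1 < Real.cos a := by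
    simpa using Real.cos_lt_cos_of_nonneg_of_le_pi ha.1 le_rfl ha.2
  rw [← Complex.norm_mul_cos_arg] at hw
  refine Complex.mem_slitPlane_iff_arg.2 ⟨fun harg ↦ ?_, hw0⟩
  rw [harg, Real.cos_pi] at hw
  linarith [le_of_mul_le_mul_left hw (norm_pos_iff.2 hw0)]

theorem harmonicContOnCl_re_cpow_symmSector (ha : a ∈ Ico 0 Real.pi) (hp : 0 < p) :
    HarmonicContOnCl (fun w : ℂ ↦ (w ^ (p : ℂ)).re) (symmSector a ρ) := by
  refine ⟨fun w hw ↦ ?_, fun w hw ↦ ?_⟩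
  · have hslit := mem_slitPlane_of_norm_mul_cos_le ha (ne_zero_of_mem_symmSector hw) hw.2.le
    exact (analyticAt_id.cpow analyticAt_const hslit).harmonicAt_re
  · have hre : 0 ≤ w.re ∨ w.im ≠ 0 := by
      rcases eq_or_ne w 0 with rfl | hw0
      · exact Or.inl le_rfl
      · exact (mem_slitPlane_of_norm_mul_cos_le ha hw0 (closure_symmSector_subset hw).2).imp_left
          le_of_lt
    exact (Complex.continuous_re.continuousAt.comp
      (Complex.continuousAt_cpow_const_of_re_pos hre (by simpa using hp))).continuousWithinAt

theorem re_cpow_eq_zero_of_norm_mul_cos_eq (ha : a ∈ Ioc 0 Real.pi)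
    (hw : ‖w‖ * Real.cos a = w.re) : (w ^ ((Real.pi / (2 * a) : ℝ) : ℂ)).re = 0 := by
  have hp : 0 < Real.pi / (2 * a) := div_pos Real.pi_pos (by linarith [ha.1])
  rw [Complex.cpow_ofReal_re]
  rcases eq_or_ne w 0 with rfl | hw0
  · rw [norm_zero, Real.zero_rpow hp.ne', zero_mul]
  · rw [← Complex.norm_mul_cos_arg, ← Real.cos_abs w.arg] at hw
    have harg : |w.arg| = a := Real.injOn_cos ⟨abs_nonneg _, Complex.abs_arg_le_pi w⟩
      (Ioc_subset_Icc_self ha) (mul_left_cancel₀ (norm_ne_zero_iff.2 hw0) hw).symm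
    have hangle : a * (Real.pi / (2 * a)) = Real.pi / 2 := by
      have ha0 := ha.1.ne'
      field_simp
    rw [← Real.cos_abs, abs_mul, harg, abs_of_pos hp, hangle, Real.cos_pi_div_two, mul_zero]

theorem exists_pos_forall_mem_symmSector_mul_re_cpow_le {F : ℂ → ℝ} (ha : a ∈ Ioo 0 Real.pi)
    (hρ : 0 < ρ) (hF : HarmonicContOnCl F (symmSector a ρ))
    (hnonneg : ∀ w ∈ closure (symmSector a ρ), 0 ≤ F w)
    (hpos : ∀ w ∈ closure (symmSector a ρ), ‖w‖ = ρ → 0 < F w) :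
    ∃ ε > 0, ∀ w ∈ symmSector a ρ, ε * (w ^ ((Real.pi / (2 * a) : ℝ) : ℂ)).re ≤ F w := by
  set p : ℝ := Real.pi / (2 * a)
  have hp : 0 < p := div_pos Real.pi_pos (by linarith [ha.1])
  have harc : IsCompact (closure (symmSector a ρ) ∩ {w | ‖w‖ = ρ}) :=
    isBounded_symmSector.isCompact_closure.inter_right
      (isClosed_eq continuous_norm continuous_const)
  obtain ⟨δ, hδ, hδF⟩ := harc.exists_forall_le' (hF.continuousOn.mono inter_subset_left)
    fun w hw ↦ hpos w hw.1 hw.2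
  have hρp : 0 < ρ ^ p := Real.rpow_pos_of_pos hρ p
  refine ⟨δ / ρ ^ p, div_pos hδ hρp, fun w hw ↦ sub_nonneg.1 ?_⟩
  refine nonneg_of_forall_mem_frontier_nonneg isBounded_symmSector
    (hF.sub ((harmonicContOnCl_re_cpow_symmSector ⟨ha.1.le, ha.2⟩ hp).const_smul (δ / ρ ^ p)))
    (fun w hw ↦ sub_nonneg.2 ?_) (subset_closure hw)
  rw [isOpen_symmSector.frontier_eq] at hw
  obtain ⟨hwcl, hwnot⟩ := hw
  obtain ⟨hwρ, hwa⟩ := closure_symmSector_subset hwcl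
  change δ / ρ ^ p * (w ^ (p : ℂ)).re ≤ F w
  rcases hwρ.eq_or_lt with harc | hlt
  · calc δ / ρ ^ p * (w ^ (p : ℂ)).re ≤ δ / ρ ^ p * ρ ^ p := by
          gcongr
          rw [Complex.cpow_ofReal_re, harc]
          exact mul_le_of_le_one_right hρp.le (Real.cos_le_one _)
      _ = δ := div_mul_cancel₀ δ hρp.ne'
      _ ≤ F w := hδF w ⟨hwcl, harc⟩
  · have hside : ‖w‖ * Real.cos a = w.re :=
      hwa.antisymm (not_lt.1 fun h ↦ hwnot ⟨hlt, h⟩)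
    rw [re_cpow_eq_zero_of_norm_mul_cos_eq (Ioo_subset_Ioc_self ha) hside, mul_zero]
    exact hnonneg w hwcl

end Sector

section SegmentLimit

theorem tendsto_div_atTop_of_mul_rpow_le {f : ℝ → ℝ} {ε p : ℝ} (hε : 0 < ε) (hp : p < 1)
    (hf : ∀ᶠ t in 𝓝[>] 0, ε * t ^ p ≤ f t) : Tendsto (fun t ↦ f t / t) (𝓝[>] 0) atTop := by
  refine tendsto_atTop_mono' _ ?_
    ((tendsto_rpow_neg_nhdsGT_zero (sub_neg.2 hp)).const_mul_atTop hε)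
  filter_upwards [hf, self_mem_nhdsWithin] with t ht (ht0 : 0 < t)
  calc ε * t ^ (p - 1) = ε * t ^ p / t := by rw [Real.rpow_sub_one ht0.ne', mul_div_assoc]
    _ ≤ f t / t := by gcongr

variable {E : Type*} [NormedAddCommGroup E] [NormedSpace ℝ E] {x v : E}

theorem nhdsWithin_segment_sdiff_singleton (hv : v ≠ 0) :
    𝓝[segment ℝ (x + v) x \ {x}] x = map (fun t : ℝ ↦ x + t • v) (𝓝[>] 0) := by
  have hemb : IsEmbedding fun t : ℝ ↦ x + t • v :=
    (Homeomorph.addLeft x).isEmbedding.comp (isClosedEmbedding_smul_left hv).isEmbedding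
  have himage : segment ℝ (x + v) x \ {x} = (fun t : ℝ ↦ x + t • v) '' Ioc 0 1 := by
    rw [segment_symm, segment_eq_image', add_sub_cancel_left, ← Icc_sdiff_left,
      image_sdiff hemb.injective, image_singleton, zero_smul, add_zero]
  rw [← nhdsWithin_Ioc_eq_nhdsGT zero_lt_one, hemb.map_nhdsWithin_eq, himage, zero_smul, add_zero]

theorem tendsto_div_dist_atTop_of_mul_rpow_le {u : E → ℝ} {ε p : ℝ} (hv : v ≠ 0) (hε : 0 < ε)
    (hp : p < 1) (hu : ∀ᶠ t : ℝ in 𝓝[>] 0, ε * t ^ p ≤ u (x + t • v)) :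
    Tendsto (fun y ↦ u y / dist y x) (𝓝[segment ℝ (x + v) x \ {x}] x) atTop := by
  rw [nhdsWithin_segment_sdiff_singleton hv, tendsto_map'_iff]
  refine ((tendsto_div_atTop_of_mul_rpow_le hε hp hu).atTop_div_const
    (norm_pos_iff.2 hv)).congr' ?_
  filter_upwards [self_mem_nhdsWithin] with t (ht : 0 < t)
  rw [Function.comp_apply, dist_self_add_left, norm_smul, Real.norm_of_nonneg ht.le, div_div]

end SegmentLimit

section GreenFunction

variable {G : Set ℂ} {z₀ ζ v : ℂ} {g : ℂ → ℝ} {a ρ : ℝ}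

theorem IsGreenFunction.continuousOn_update (hg : IsGreenFunction G ζ g) (hz₀ : z₀ ∈ frontier G) :
    ContinuousOn (Function.update g z₀ 0) (insert z₀ (G \ {ζ})) := by
  refine continuousOn_update_iff.2 ⟨?_, fun _ ↦ ?_⟩
  · exact hg.harmonic.harmonicOnNhd.continuousOn.mono (by simp)
  · exact (hg.boundaryLimit z₀ hz₀).mono_left (nhdsWithin_mono _ (by grind))

theorem IsGreenFunction.exists_mul_rpow_le (hg : IsGreenFunction G ζ g) (hz₀ : z₀ ∈ frontier G)
    (hv : v ≠ 0) (ha : a ∈ Ioo 0 Real.pi) (hρ : 0 < ρ)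
    (hmaps : MapsTo (fun w ↦ z₀ + v * w) (closure (symmSector a ρ) \ {0}) (G \ {ζ})) :
    ∃ ε > 0, ∀ t ∈ Ioo 0 ρ, ε * t ^ (Real.pi / (2 * a)) ≤ g (z₀ + v * (t : ℂ)) := by
  -- `g` is unconstrained at the boundary point `z₀`, so it is first given its limit `0` there.
  set F : ℂ → ℝ := fun w ↦ Function.update g z₀ 0 (z₀ + v * w)
  have hF0 : F 0 = 0 := by simp [F]
  have hFg {w : ℂ} (hw : w ≠ 0) : F w = g (z₀ + v * w) :=
    Function.update_of_ne (by simp [hv, hw]) _ _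
  have hpos : ∀ w ∈ closure (symmSector a ρ), w ≠ 0 → 0 < F w := fun w hw hw0 ↦
    (hFg hw0).symm ▸ hg.pos _ (hmaps ⟨hw, hw0⟩)
  have hharm : HarmonicOnNhd F (symmSector a ρ) := by
    intro w hw
    have hw0 := ne_zero_of_mem_symmSector hw
    refine (harmonicAt_congr_nhds ((isOpen_ne.eventually_mem hw0).mono fun y hy ↦ hFg hy)).2 ?_
    exact harmonicAt_comp_of_analyticAt
      (hg.harmonic.harmonicOnNhd _ (hmaps ⟨subset_closure hw, hw0⟩)) (by fun_prop)
  have hcont : ContinuousOn F (closure (symmSector a ρ)) := by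
    refine (hg.continuousOn_update hz₀).comp (by fun_prop) fun w hw ↦ ?_
    rcases eq_or_ne w 0 with rfl | hw0
    · simp
    · exact Or.inr (hmaps ⟨hw, hw0⟩)
  obtain ⟨ε, hε, hle⟩ := exists_pos_forall_mem_symmSector_mul_re_cpow_le ha hρ ⟨hharm, hcont⟩
    (fun w hw ↦ (eq_or_ne w 0).elim (fun h ↦ h ▸ hF0.ge) fun h ↦ (hpos w hw h).le)
    (fun w hw hwρ ↦ hpos w hw (norm_pos_iff.1 (hwρ ▸ hρ)))
  refine ⟨ε, hε, fun t ⟨ht0, htρ⟩ ↦ ?_⟩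
  have ht : (t : ℂ) ∈ symmSector a ρ := by
    have hcos : Real.cos a < 1 := by
      simpa using Real.cos_lt_cos_of_nonneg_of_le_pi le_rfl ha.2.le ha.1
    refine ⟨by rwa [Complex.norm_of_nonneg ht0.le], ?_⟩
    rw [Complex.norm_of_nonneg ht0.le, Complex.ofReal_re]
    exact mul_lt_of_lt_one_right ht0 hcos
  have h := hle t ht
  rwa [hFg (ne_zero_of_mem_symmSector ht), ← Complex.ofReal_cpow ht0.le, Complex.ofReal_re] at h

theorem isNCSPoint_of_mapsTo_symmSector (hz₀ : z₀ ∈ frontier G) (hv : v ≠ 0)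
    (ha : a ∈ Ioc (Real.pi / 2) Real.pi) (hρ : 2 < ρ)
    (hmaps : MapsTo (fun w ↦ z₀ + v * w) (symmSector a ρ) G) : IsNCSPoint G z₀ := by
  have hπ := Real.pi_pos
  refine ⟨hz₀, z₀ + v, ‖v‖, norm_pos_iff.2 hv, by simp, ?_, z₀ + v,
    mem_ball_self (norm_pos_iff.2 hv), fun g hg ↦ ?_⟩
  · rintro z ⟨hz, hz0⟩
    obtain ⟨w, rfl⟩ : ∃ w, z₀ + v * w = z := ⟨(z - z₀) / v, by field_simp; ring⟩
    refine hmaps (closedBall_one_sdiff_zero_subset_symmSector ⟨ha.1.le, ha.2⟩ hρ ⟨?_, ?_⟩)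
    · rw [mem_closedBall, dist_add_left, dist_eq_norm, ← mul_sub_one, norm_mul] at hz
      rw [mem_closedBall, dist_eq_norm]
      exact (mul_le_iff_le_one_right (norm_pos_iff.2 hv)).1 hz
    · rintro rfl
      simp at hz0
  · obtain ⟨b, hb, hba⟩ := exists_between ha.1
    have hb0 : 0 < b := (half_pos hπ).trans hb
    -- Radius `1 / 2` keeps the pole `z₀ + v` outside the sector.
    have hmaps' : MapsTo (fun w ↦ z₀ + v * w) (closure (symmSector b (1 / 2)) \ {0})
        (G \ {z₀ + v}) := by
      refine fun w hw ↦ ⟨hmaps (closure_symmSector_sdiff_zero_subset hb0.le hba ha.2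
        (by linarith) hw), fun hpole ↦ ?_⟩
      have hw1 : w = 1 := by simpa [hv] using hpole
      have hnorm := (closure_symmSector_subset hw.1).1
      norm_num [hw1] at hnorm
    obtain ⟨ε, hε, hle⟩ :=
      hg.exists_mul_rpow_le hz₀ hv ⟨hb0, hba.trans_le ha.2⟩ one_half_pos hmaps'
    have hp : Real.pi / (2 * b) < 1 := (div_lt_one (by positivity)).2 (by linarith)
    refine tendsto_div_dist_atTop_of_mul_rpow_le hv hε hp ?_
    filter_upwards [Ioo_mem_nhdsGT one_half_pos] with t ht
    simpa only [Complex.real_smul, mul_comm] using hle t ht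

end GreenFunction

section InwardCorner

/-- The open circular sector of radius `r` with vertex `z₀` between the directions `θ₁` and `θ₂`,
given by polar coordinates in which the angle is not reduced modulo `2π`. It is the sector `S` of
the definition of an inward corner. -/
def circularSector (z₀ : ℂ) (r θ₁ θ₂ : ℝ) : Set ℂ :=
  (fun p : ℝ × ℝ ↦ z₀ + (p.1 : ℂ) * Complex.exp (Complex.I * (p.2 : ℂ))) '' (Ioo 0 r ×ˢ Ioo θ₁ θ₂)

variable {z₀ : ℂ} {r θ₁ θ₂ : ℝ}

theorem notMem_circularSector : z₀ ∉ circularSector z₀ r θ₁ θ₂ := by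
  rintro ⟨⟨s, θ⟩, ⟨hs, -⟩, h⟩
  simp [hs.1.ne'] at h

theorem mapsTo_symmSector_circularSector {a s ρ θ : ℝ} (ha : a ∈ Icc 0 Real.pi) (hs : 0 < s) :
    MapsTo (fun w ↦ z₀ + s * Complex.exp (θ * Complex.I) * w) (symmSector a ρ)
      (circularSector z₀ (s * ρ) (θ - a) (θ + a)) := by
  intro w hw
  obtain ⟨harg₁, harg₂⟩ := abs_lt.1 (abs_arg_lt_of_mem_symmSector ha hw)
  have hnorm : 0 < ‖w‖ := norm_pos_iff.2 (ne_zero_of_mem_symmSector hw)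
  refine ⟨(s * ‖w‖, θ + w.arg), ⟨⟨by positivity, mul_lt_mul_of_pos_left hw.1 hs⟩,
    by dsimp only; linarith, by dsimp only; linarith⟩, ?_⟩
  dsimp only
  conv_rhs => rw [← Complex.norm_mul_exp_arg_mul_I w]
  push_cast
  rw [mul_add, Complex.exp_add, mul_comm Complex.I, mul_comm Complex.I]
  ring

theorem circularSector_mono {φ₁ φ₂ : ℝ} (h₁ : φ₁ ≤ θ₁) (h₂ : θ₂ ≤ φ₂) :
    circularSector z₀ r θ₁ θ₂ ⊆ circularSector z₀ r φ₁ φ₂ :=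
  image_mono (prod_mono_right (Ioo_subset_Ioo h₁ h₂))

theorem inward_corner_is_NCS_general {G : Set ℂ} {α β : ℝ} (hz₀ : z₀ ∈ frontier G) (hr : 0 < r)
    (hαβ : 1 < β - α) (hsub : circularSector z₀ r (α * Real.pi) (β * Real.pi) ⊆ G) :
    IsNCSPoint G z₀ := by
  have hπ := Real.pi_pos
  obtain ⟨a, ha, haαβ⟩ : ∃ a ∈ Ioc (Real.pi / 2) Real.pi, a ≤ (β - α) * Real.pi / 2 :=
    ⟨min Real.pi ((β - α) * Real.pi / 2),
      ⟨lt_min (by linarith) (by nlinarith), min_le_left _ _⟩, min_le_right _ _⟩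
  set θ : ℝ := (α + β) * Real.pi / 2
  have hv : ((r / 3 : ℝ) : ℂ) * Complex.exp (θ * Complex.I) ≠ 0 :=
    mul_ne_zero (by exact_mod_cast (by positivity : r / 3 ≠ 0)) (Complex.exp_ne_zero _)
  refine isNCSPoint_of_mapsTo_symmSector (ρ := 3) hz₀ hv ha (by norm_num) ?_
  refine (mapsTo_symmSector_circularSector ⟨by linarith [ha.1], ha.2⟩ (by positivity)).mono_right ?_
  rw [div_mul_cancel₀ r three_ne_zero]
  exact (circularSector_mono (by simp only [θ]; linarith) (by simp only [θ]; linarith)).trans hsub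

end InwardCorner

/-- **Inward corner points are NCS points.** If `G` is a bounded simply connected domain and
`z₀ ∈ ∂G` carries a circular sector `S = {z : 0 < |z-z₀| < r, απ < arg(z-z₀) < βπ}` with
`β - α > 1` whose closure is contained in `G ∪ {z₀}`, then `z₀` is an NCS point of `G`. -/
theorem inward_corner_is_NCS
    (G : Set ℂ) (hGopen : IsOpen G) (hGconn : IsConnected G)
    (hGbdd : Bornology.IsBounded G) (hGsc : SimplyConnectedSpace G)
    (z₀ : ℂ) (hz₀ : z₀ ∈ frontier G)
    (r α β : ℝ) (hr : 0 < r) (hαβ : 1 < β - α)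
    (S : Set ℂ)
    (hS : S = (fun p : ℝ × ℝ => z₀ + (p.1 : ℂ) * Complex.exp (Complex.I * (p.2 : ℂ))) ''
      (Set.Ioo 0 r ×ˢ Set.Ioo (α * Real.pi) (β * Real.pi)))
    (hsub : closure S ⊆ G ∪ {z₀}) :
    IsNCSPoint G z₀ := by
  subst hS
  exact inward_corner_is_NCS_general hz₀ hr hαβ fun z hz ↦
    (hsub (subset_closure hz)).resolve_right fun h ↦ notMem_circularSector (h ▸ hz)
end

section
/- Let E ⊂ ℂ be compact, Ω the unbounded component of ℂ̄∖E, and 𝓔 := ℂ̄∖Ω. If E₀ ⊂ 𝓔 is a closed set with dist(E₀, 𝓔∖E₀) > 0, then every connected component of the interior int(E₀) is simply connected. -/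
open MeasureTheory Filter Metric Set Polynomial Topology
open scoped ENNReal Classical

/-!
A set that contains every bounded open set whose boundary it contains has no bounded holes. The
hull `𝓔` has this property, and it passes to interiors. It also passes to a part at positive
distance from the rest and to components of open sets, since there the offending piece of a bounded
open set would be a nonempty bounded clopen set.

An open connected plane set `G` without bounded holes is simply connected. Subdividing finely, a
loop is replaced by a closed walk along the edges of a square grid. The union of the grid squares
around which the walk has nonzero winding number can only have boundary points on the walk, hence
lies in `G`. The square below a topmost corner of the walk has winding number `±1`, so the walk may
be pushed down across it without changing its class in the fundamental group; this shortens or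
lowers the walk, which is finally trivial.
-/

/-! ### Sets without bounded holes -/

section IsHoleFree

/-- A set has no bounded holes if it contains every bounded open set whose boundary it contains.
For a compact plane set this says that the set is its own polynomial convex hull. -/
def IsHoleFree {X : Type*} [TopologicalSpace X] [Bornology X] (G : Set X) : Prop :=
  ∀ A, IsOpen A → Bornology.IsBounded A → frontier A ⊆ G → A ⊆ G

protected theorem IsHoleFree.interior {X : Type*} [TopologicalSpace X] [Bornology X] {G : Set X}
    (hG : IsHoleFree G) : IsHoleFree (interior G) := fun A hA hAb hfr =>
  interior_maximal (hG A hA hAb (hfr.trans interior_subset)) hA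

theorem IsHoleFree.preimage_homeomorph {X Y : Type*} [TopologicalSpace X] [Bornology X]
    [TopologicalSpace Y] [Bornology Y] {G : Set Y} (hG : IsHoleFree G) (h : X ≃ₜ Y)
    (hb : ∀ A : Set X, Bornology.IsBounded A → Bornology.IsBounded (h '' A)) :
    IsHoleFree (h ⁻¹' G) := by
  intro A hA hAb hfr
  rw [← image_subset_iff] at hfr ⊢
  exact hG _ (h.isOpenMap A hA) (hb A hAb) (h.image_frontier A ▸ hfr)

variable {X : Type*} [NormedAddCommGroup X] [NormedSpace ℝ X] [Nontrivial X]

theorem eq_empty_of_isClopen_of_isBounded {A : Set X} (hA : IsClopen A)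
    (hAb : Bornology.IsBounded A) : A = ∅ :=
  (isClopen_iff.1 hA).resolve_right fun h => NormedSpace.unbounded_univ ℝ X (h ▸ hAb)

theorem IsHoleFree.of_separatedNhds {K S : Set X} (hK : IsHoleFree K) (hSK : S ⊆ K)
    (hsep : SeparatedNhds S (K \ S)) : IsHoleFree S := by
  intro A hA hAb hfr
  have hAK : A ⊆ K := hK A hA hAb (hfr.trans hSK)
  obtain ⟨U, V, hU, hV, hSU, hKV, hUV⟩ := hsep
  have hAV : IsClopen (A \ S) := by
    have h_eq_inter : A \ S = A ∩ V := by
      ext x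
      exact ⟨fun hx => ⟨hx.1, hKV ⟨hAK hx.1, hx.2⟩⟩,
        fun hx => ⟨hx.1, fun hxS => hUV.le_bot ⟨hSU hxS, hx.2⟩⟩⟩
    have h_eq_diff : A \ S = closure A \ U := by
      ext x
      refine ⟨fun hx => ⟨subset_closure hx.1, fun hxU => hUV.le_bot ⟨hxU, ?_⟩⟩, fun hx => ?_⟩
      · exact hKV ⟨hAK hx.1, hx.2⟩
      · have hxS : x ∉ S := fun h => hx.2 (hSU h)
        rw [closure_eq_self_union_frontier] at hx
        exact ⟨hx.1.resolve_right fun h => hxS (hfr h), hxS⟩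
    constructor
    · rw [h_eq_diff]
      exact isClosed_closure.sdiff hU
    · rw [h_eq_inter]
      exact hA.inter hV
  exact sdiff_eq_empty.1 (eq_empty_of_isClopen_of_isBounded hAV (hAb.subset sdiff_subset))

protected theorem IsHoleFree.connectedComponentIn {U : Set X} (hU : IsHoleFree U) (hUo : IsOpen U)
    (x : X) : IsHoleFree (connectedComponentIn U x) := by
  refine hU.of_separatedNhds (connectedComponentIn_subset U x)
    ⟨_, U \ connectedComponentIn U x, hUo.connectedComponentIn, ?_, Subset.rfl, Subset.rfl,
      disjoint_sdiff_right⟩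
  rw [isOpen_iff_mem_nhds]
  rintro y ⟨hyU, hyx⟩
  refine mem_of_superset (hUo.connectedComponentIn.mem_nhds (mem_connectedComponentIn hyU))
    fun w hw => ⟨connectedComponentIn_subset U y hw, fun hwx => hyx ?_⟩
  rw [connectedComponentIn_eq hwx, ← connectedComponentIn_eq hw]
  exact mem_connectedComponentIn hyU

end IsHoleFree

theorem subset_of_isPreconnected_of_disjoint_frontier {X : Type*} [TopologicalSpace X] {A C : Set X}
    (hC : IsPreconnected C) (hA : IsOpen A) (hCA : (C ∩ A).Nonempty)
    (hfr : Disjoint (frontier A) C) : C ⊆ A := by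
  have := Subtype.preconnectedSpace hC
  obtain ⟨x, hxC, hxA⟩ := hCA
  have huniv : (Subtype.val ⁻¹' A : Set C) = univ :=
    (isClopen_preimage_val hA hfr).eq_univ ⟨⟨x, hxC⟩, hxA⟩
  exact fun y hy => huniv.ge (mem_univ (⟨y, hy⟩ : C))

theorem isHoleFree_compl_outerDomain (E : Set ℂ) : IsHoleFree (outerDomain E)ᶜ := by
  rintro A hA hAb hfr x hxA ⟨hxE, hx⟩
  have hC : connectedComponentIn Eᶜ x ⊆ outerDomain E := fun y hy =>
    ⟨connectedComponentIn_subset _ _ hy, by rwa [← connectedComponentIn_eq hy]⟩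
  have hCA : connectedComponentIn Eᶜ x ⊆ A :=
    subset_of_isPreconnected_of_disjoint_frontier isPreconnected_connectedComponentIn hA
      ⟨x, mem_connectedComponentIn hxE, hxA⟩ (disjoint_compl_left.mono hfr hC)
  exact hx (hAb.subset hCA)

theorem separatedNhds_of_forall_le_dist {X : Type*} [PseudoMetricSpace X] {S T : Set X} {d : ℝ}
    (hd : 0 < d) (h : ∀ a ∈ S, ∀ b ∈ T, d ≤ dist a b) : SeparatedNhds S T := by
  refine ⟨thickening (d / 2) S, thickening (d / 2) T, isOpen_thickening, isOpen_thickening,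
    self_subset_thickening (half_pos hd) S, self_subset_thickening (half_pos hd) T,
    disjoint_left.2 fun x hxS hxT => ?_⟩
  obtain ⟨a, ha, hxa⟩ := mem_thickening_iff.1 hxS
  obtain ⟨b, hb, hxb⟩ := mem_thickening_iff.1 hxT
  linarith [h a ha b hb, dist_triangle_left a b x]

/-! ### Local cocycles -/

section IsLocalCocycle

variable {V H : Type*} [AddCommGroup V] [Module ℝ V] [Group H]

/-- A group-valued function of two points is a local cocycle on `G` if it is multiplicative along
triangles lying in a convex subset of `G`. Such functions abstract the transport of a class of paths
along a straight segment; off the segments contained in `G` their values are irrelevant. -/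
def IsLocalCocycle (G : Set V) (e : V → V → H) : Prop :=
  ∀ K ⊆ G, Convex ℝ K → ∀ x ∈ K, ∀ y ∈ K, ∀ z ∈ K, e x y * e y z = e x z

variable {G : Set V} {e : V → V → H}

theorem IsLocalCocycle.self (he : IsLocalCocycle G e) {x : V} (hx : x ∈ G) : e x x = 1 :=
  mul_eq_left.1 <| he {x} (singleton_subset_iff.2 hx) (convex_singleton x) x rfl x rfl x rfl

theorem IsLocalCocycle.mul_swap (he : IsLocalCocycle G e) {x y : V} (h : segment ℝ x y ⊆ G) :
    e x y * e y x = 1 := by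
  rw [he _ h (convex_segment x y) x (left_mem_segment ℝ x y) y (right_mem_segment ℝ x y) x
    (left_mem_segment ℝ x y), he.self (h (left_mem_segment ℝ x y))]

theorem IsLocalCocycle.comp_linearMap {W : Type*} [AddCommGroup W] [Module ℝ W]
    (he : IsLocalCocycle G e) (f : W →ₗ[ℝ] V) :
    IsLocalCocycle (f ⁻¹' G) fun x y => e (f x) (f y) := fun K hK hconv _ hx _ hy _ hz =>
  he (f '' K) (image_subset_iff.2 hK) (hconv.linear_image f) _ (mem_image_of_mem f hx) _
    (mem_image_of_mem f hy) _ (mem_image_of_mem f hz)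

end IsLocalCocycle

/-! ### Winding numbers of grid walks -/

noncomputable section Grid

/-- The point of the Gaussian integer grid with the given integer coordinates. -/
def gridPoint (v : ℤ × ℤ) : ℂ := ⟨v.1, v.2⟩

/-- The lower left corner of the grid square containing a point. -/
def floorPoint (z : ℂ) : ℤ × ℤ := (⌊z.re⌋, ⌊z.im⌋)

/-- The graph of those unit edges of the integer grid which are contained in `G`. -/
def gridGraph (G : Set ℂ) : SimpleGraph (ℤ × ℤ) where
  Adj u v := (u.2 = v.2 ∧ (v.1 = u.1 + 1 ∨ u.1 = v.1 + 1) ∨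
    u.1 = v.1 ∧ (v.2 = u.2 + 1 ∨ u.2 = v.2 + 1)) ∧ segment ℝ (gridPoint u) (gridPoint v) ⊆ G
  symm := ⟨fun u v h => ⟨by omega, segment_symm ℝ (gridPoint u) (gridPoint v) ▸ h.2⟩⟩
  loopless := ⟨fun u h => by omega⟩

/-- The closed unit square with lower left corner `s`; grid squares are named by this corner. -/
def unitSquare (s : ℤ × ℤ) : Set ℂ := Icc (s.1 : ℝ) (s.1 + 1) ×ℂ Icc (s.2 : ℝ) (s.2 + 1)

/-- The signed number of times (`0`, `1` or `-1`) that the grid edge from `u` to `v` crosses the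
vertical ray going up from the centre of the square `s`, counted positively from left to right. -/
def crossing (s u v : ℤ × ℤ) : ℤ :=
  if s.2 < u.2 then (if s.1 < v.1 then 1 else 0) - (if s.1 < u.1 then 1 else 0) else 0

variable {G : Set ℂ}

/-- The winding number of a closed grid walk around the centre of the square `s` (up to sign),
computed as the total number of crossings of a ray starting there. -/
def winding (s : ℤ × ℤ) {u v : ℤ × ℤ} (p : (gridGraph G).Walk u v) : ℤ :=
  (p.darts.map fun d => crossing s d.fst d.snd).sum

theorem convex_unitSquare (s : ℤ × ℤ) : Convex ℝ (unitSquare s) :=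
  ((convex_Icc _ _).linear_preimage Complex.reLm).inter
    ((convex_Icc _ _).linear_preimage Complex.imLm)

theorem isCompact_unitSquare (s : ℤ × ℤ) : IsCompact (unitSquare s) :=
  isCompact_Icc.reProdIm isCompact_Icc

theorem gridPoint_mem_unitSquare {s v : ℤ × ℤ} (h₁ : s.1 ≤ v.1) (h₁' : v.1 ≤ s.1 + 1)
    (h₂ : s.2 ≤ v.2) (h₂' : v.2 ≤ s.2 + 1) : gridPoint v ∈ unitSquare s := by
  have h : ((s.1 : ℝ) ≤ v.1 ∧ (v.1 : ℝ) ≤ s.1 + 1) ∧ (s.2 : ℝ) ≤ v.2 ∧ (v.2 : ℝ) ≤ s.2 + 1 :=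
    mod_cast And.intro ⟨h₁, h₁'⟩ ⟨h₂, h₂'⟩
  exact h

theorem mem_unitSquare_floorPoint (z : ℂ) : z ∈ unitSquare (floorPoint z) :=
  ⟨⟨Int.floor_le z.re, (Int.lt_floor_add_one z.re).le⟩,
    ⟨Int.floor_le z.im, (Int.lt_floor_add_one z.im).le⟩⟩

theorem eventually_floor_le_and_le_floor_add_one (x : ℝ) :
    ∀ᶠ y in 𝓝 x, x ∈ Icc (⌊y⌋ : ℝ) (⌊y⌋ + 1) := by
  filter_upwards [Ioo_mem_nhds (sub_lt_iff_lt_add.2 (Int.ceil_lt_add_one x))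
    (Int.lt_floor_add_one x)] with y hy
  have h_floor : ⌊y⌋ ≤ ⌊x⌋ := Int.lt_add_one_iff.1 <| Int.floor_lt.2 <| mod_cast hy.2
  have h_ceil : ⌈x⌉ - 1 ≤ ⌊y⌋ := Int.le_floor.2 <| mod_cast hy.1.le
  exact ⟨Int.le_floor.1 h_floor, mod_cast Int.ceil_le.1 (sub_le_iff_le_add.1 h_ceil)⟩

theorem eventually_mem_unitSquare_floorPoint (z : ℂ) :
    ∀ᶠ w in 𝓝 z, z ∈ unitSquare (floorPoint w) :=
  (Complex.continuous_re.continuousAt.eventually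
      (eventually_floor_le_and_le_floor_add_one z.re)).and
    (Complex.continuous_im.continuousAt.eventually
      (eventually_floor_le_and_le_floor_add_one z.im))

theorem mem_segment_gridPoint_of_horizontal {i j : ℤ} {z : ℂ} (hre : z.re ∈ Icc (i : ℝ) (i + 1))
    (him : z.im = j) : z ∈ segment ℝ (gridPoint (i, j)) (gridPoint (i + 1, j)) := by
  refine ⟨i + 1 - z.re, z.re - i, by linarith [hre.2], by linarith [hre.1], by ring, ?_⟩
  apply Complex.ext <;> simp [gridPoint, him] <;> ring

theorem mem_segment_gridPoint_of_vertical {i j : ℤ} {z : ℂ} (hre : z.re = i)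
    (him : z.im ∈ Icc (j : ℝ) (j + 1)) :
    z ∈ segment ℝ (gridPoint (i, j)) (gridPoint (i, j + 1)) := by
  refine ⟨j + 1 - z.im, z.im - j, by linarith [him.2], by linarith [him.1], by ring, ?_⟩
  apply Complex.ext <;> simp [gridPoint, hre] <;> ring

theorem sum_darts_sub {V A : Type*} {Γ : SimpleGraph V} [AddCommGroup A] (φ : V → A) {u v : V}
    (p : Γ.Walk u v) : (p.darts.map fun d => φ d.snd - φ d.fst).sum = φ v - φ u := by
  induction p with
  | nil => simp
  | cons h p ih => simp [ih]

theorem winding_eq_of_crossing_sub_eq {s t u : ℤ × ℤ} (p : (gridGraph G).Walk u u)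
    (φ : ℤ × ℤ → ℤ)
    (h : ∀ d ∈ p.darts, crossing s d.fst d.snd = crossing t d.fst d.snd + (φ d.snd - φ d.fst)) :
    winding s p = winding t p := by
  rw [winding, List.map_congr_left h, List.sum_map_add, sum_darts_sub, sub_self, add_zero, winding]

theorem winding_eq_winding_succ_snd {i j : ℤ} {z : ℂ} (hzG : z ∉ G)
    (hre : z.re ∈ Icc (i : ℝ) (i + 1)) (him : z.im = (j + 1 : ℤ)) {u : ℤ × ℤ}
    (p : (gridGraph G).Walk u u) : winding (i, j) p = winding (i, j + 1) p := by
  refine winding_eq_of_crossing_sub_eq p 0 fun ⟨⟨⟨a, b⟩, ⟨c, d⟩⟩, hadj, hseg⟩ _ => ?_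
  have h_right : ¬ (a = i ∧ b = j + 1 ∧ c = i + 1 ∧ d = j + 1) := by
    rintro ⟨rfl, rfl, rfl, rfl⟩
    exact hzG (hseg (mem_segment_gridPoint_of_horizontal hre him))
  have h_left : ¬ (a = i + 1 ∧ b = j + 1 ∧ c = i ∧ d = j + 1) := by
    rintro ⟨rfl, rfl, rfl, rfl⟩
    rw [segment_symm] at hseg
    exact hzG (hseg (mem_segment_gridPoint_of_horizontal hre him))
  simp only [crossing, Pi.zero_apply, sub_zero, add_zero] at hadj ⊢
  split_ifs <;> omega

theorem winding_eq_winding_succ_fst {i j : ℤ} {z : ℂ} (hzG : z ∉ G) (hre : z.re = (i + 1 : ℤ))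
    (him : z.im ∈ Icc (j : ℝ) (j + 1)) {u : ℤ × ℤ} (p : (gridGraph G).Walk u u) :
    winding (i, j) p = winding (i + 1, j) p := by
  -- Moving the ray across the column `i + 1` changes each crossing by the increment of a function
  -- of the endpoints, except on the vertical edge through `z`, which the walk avoids.
  refine winding_eq_of_crossing_sub_eq p (fun v => if j < v.2 ∧ v.1 = i + 1 then 1 else 0)
    fun ⟨⟨⟨a, b⟩, ⟨c, d⟩⟩, hadj, hseg⟩ _ => ?_
  have h_up : ¬ (a = i + 1 ∧ b = j ∧ c = i + 1 ∧ d = j + 1) := by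
    rintro ⟨rfl, rfl, rfl, rfl⟩
    exact hzG (hseg (mem_segment_gridPoint_of_vertical hre him))
  have h_down : ¬ (a = i + 1 ∧ b = j + 1 ∧ c = i + 1 ∧ d = j) := by
    rintro ⟨rfl, rfl, rfl, rfl⟩
    rw [segment_symm] at hseg
    exact hzG (hseg (mem_segment_gridPoint_of_vertical hre him))
  simp only [crossing] at hadj ⊢
  split_ifs <;> omega

theorem winding_eq_of_mem_unitSquare_of_snd_eq {i k j : ℤ} {z : ℂ} (hzG : z ∉ G)
    (hi : z ∈ unitSquare (i, j)) (hk : z ∈ unitSquare (k, j)) {u : ℤ × ℤ}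
    (p : (gridGraph G).Walk u u) : winding (i, j) p = winding (k, j) p := by
  wlog hik : i ≤ k generalizing i k
  · exact (this hk hi (le_of_not_ge hik)).symm
  have hki : (k : ℝ) ≤ (i + 1 : ℤ) := mod_cast hk.1.1.trans hi.1.2
  obtain rfl | hik := hik.eq_or_lt
  · rfl
  · obtain rfl : k = i + 1 := le_antisymm (Int.cast_le.1 hki) hik
    exact winding_eq_winding_succ_fst hzG (le_antisymm (mod_cast hi.1.2) hk.1.1) hi.2 p

theorem winding_eq_of_mem_unitSquare_of_fst_eq {i j l : ℤ} {z : ℂ} (hzG : z ∉ G)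
    (hj : z ∈ unitSquare (i, j)) (hl : z ∈ unitSquare (i, l)) {u : ℤ × ℤ}
    (p : (gridGraph G).Walk u u) : winding (i, j) p = winding (i, l) p := by
  wlog hjl : j ≤ l generalizing j l
  · exact (this hl hj (le_of_not_ge hjl)).symm
  have hlj : (l : ℝ) ≤ (j + 1 : ℤ) := mod_cast hl.2.1.trans hj.2.2
  obtain rfl | hjl := hjl.eq_or_lt
  · rfl
  · obtain rfl : l = j + 1 := le_antisymm (Int.cast_le.1 hlj) hjl
    exact winding_eq_winding_succ_snd hzG hj.1 (le_antisymm (mod_cast hj.2.2) hl.2.1) p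

theorem winding_eq_of_mem_unitSquare {s t : ℤ × ℤ} {z : ℂ} (hzG : z ∉ G) (hs : z ∈ unitSquare s)
    (ht : z ∈ unitSquare t) {u : ℤ × ℤ} (p : (gridGraph G).Walk u u) :
    winding s p = winding t p :=
  have hmid : z ∈ unitSquare (t.1, s.2) := ⟨ht.1, hs.2⟩
  (winding_eq_of_mem_unitSquare_of_snd_eq hzG hs hmid p).trans
    (winding_eq_of_mem_unitSquare_of_fst_eq hzG hmid ht p)

theorem winding_eq_zero_of_crossing_eq_sub {s u : ℤ × ℤ} (p : (gridGraph G).Walk u u)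
    (φ : ℤ × ℤ → ℤ) (h : ∀ d ∈ p.darts, crossing s d.fst d.snd = φ d.snd - φ d.fst) :
    winding s p = 0 := by
  rw [winding, List.map_congr_left h, sum_darts_sub, sub_self]

theorem finite_setOf_winding_ne_zero {u : ℤ × ℤ} (p : (gridGraph G).Walk u u) :
    {s | winding s p ≠ 0}.Finite := by
  obtain ⟨a, ha⟩ := p.support.finite_toSet.bddBelow
  obtain ⟨b, hb⟩ := p.support.finite_toSet.bddAbove
  refine (finite_Icc a b).subset fun s hs => by_contra fun hs_notMem => hs ?_
  refine winding_eq_zero_of_crossing_eq_sub p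
    (fun v => if s.2 < a.2 ∧ s.1 < v.1 then 1 else 0) fun d hd => ?_
  have h_fst := p.dart_fst_mem_support_of_mem_darts hd
  have h_snd := p.dart_snd_mem_support_of_mem_darts hd
  have ha₁ := ha h_fst
  have ha₂ := ha h_snd
  have hb₁ := hb h_fst
  have hb₂ := hb h_snd
  simp only [mem_Icc, Prod.le_def] at hs_notMem ha₁ ha₂ hb₁ hb₂
  simp only [crossing]
  split_ifs <;> omega

theorem IsHoleFree.unitSquare_subset (hG : IsHoleFree G) {u : ℤ × ℤ} (p : (gridGraph G).Walk u u)
    {s : ℤ × ℤ} (hs : winding s p ≠ 0) : unitSquare s ⊆ G := by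
  set T := ⋃ t ∈ {t | winding t p ≠ 0}, unitSquare t
  have hTc : IsCompact T :=
    (finite_setOf_winding_ne_zero p).isCompact_biUnion fun t _ => isCompact_unitSquare t
  -- Grid squares meeting at a point outside `G` have the same winding number.
  have hT_nhds : ∀ z ∈ T, z ∉ G → z ∈ interior T := by
    intro z hzT hzG
    obtain ⟨t, ht, hzt⟩ := mem_iUnion₂.1 hzT
    rw [mem_interior_iff_mem_nhds]
    filter_upwards [eventually_mem_unitSquare_floorPoint z] with w hw
    refine mem_biUnion ?_ (mem_unitSquare_floorPoint w)
    exact (winding_eq_of_mem_unitSquare hzG hw hzt p).trans_ne ht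
  have hfr : frontier (interior T) ⊆ G := fun z hz => by_contra fun hzG =>
    hz.2 <| by
      rw [interior_interior]
      exact hT_nhds z (hTc.isClosed.closure_interior_subset hz.1) hzG
  have hint : interior T ⊆ G :=
    hG _ isOpen_interior (hTc.isBounded.subset interior_subset) hfr
  have hTG : T ⊆ G := fun z hz => by_contra fun hzG => hzG (hint (hT_nhds z hz hzG))
  exact (subset_biUnion_of_mem (u := unitSquare) hs).trans hTG

end Grid

/-! ### Holonomy of closed grid walks -/

noncomputable section Holonomy

variable {H : Type*} [Group H] {G : Set ℂ} {e : ℂ → ℂ → H}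

/-- The product of the values of `e` along the edges of a grid walk. -/
def holonomy (e : ℂ → ℂ → H) {u v : ℤ × ℤ} (p : (gridGraph G).Walk u v) : H :=
  (p.darts.map fun d => e (gridPoint d.fst) (gridPoint d.snd)).prod

@[simp]
theorem holonomy_nil {u : ℤ × ℤ} : holonomy e (.nil : (gridGraph G).Walk u u) = 1 := rfl

@[simp]
theorem holonomy_cons {u v w : ℤ × ℤ} (h : (gridGraph G).Adj u v) (p : (gridGraph G).Walk v w) :
    holonomy e (p.cons h) = e (gridPoint u) (gridPoint v) * holonomy e p := rfl

@[simp]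
theorem holonomy_append {u v w : ℤ × ℤ} (p : (gridGraph G).Walk u v) (q : (gridGraph G).Walk v w) :
    holonomy e (p.append q) = holonomy e p * holonomy e q := by
  simp [holonomy]

@[simp]
theorem holonomy_concat {u v w : ℤ × ℤ} (p : (gridGraph G).Walk u v) (h : (gridGraph G).Adj v w) :
    holonomy e (p.concat h) = holonomy e p * e (gridPoint v) (gridPoint w) := by
  simp [SimpleGraph.Walk.concat_eq_append]

theorem holonomy_rotate_eq_one_iff {u v : ℤ × ℤ} (p : (gridGraph G).Walk u u)
    (hv : v ∈ p.support) : holonomy e (p.rotate v hv) = 1 ↔ holonomy e p = 1 := by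
  rw [SimpleGraph.Walk.rotate, holonomy_append, mul_eq_one_comm, ← holonomy_append, p.take_spec]

/-- The length of a grid walk plus the heights, above level `M`, of the initial points of its edges.
It decreases when a corner of the walk is pushed down or a closed piece is cut out. -/
def weight (M : ℤ) {u v : ℤ × ℤ} (p : (gridGraph G).Walk u v) : ℕ :=
  (p.darts.map fun d => 1 + (d.fst.2 - M).toNat).sum

variable {M : ℤ}

@[simp]
theorem weight_cons {u v w : ℤ × ℤ} (h : (gridGraph G).Adj u v) (p : (gridGraph G).Walk v w) :
    weight M (p.cons h) = 1 + (u.2 - M).toNat + weight M p := rfl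

@[simp]
theorem weight_append {u v w : ℤ × ℤ} (p : (gridGraph G).Walk u v) (q : (gridGraph G).Walk v w) :
    weight M (p.append q) = weight M p + weight M q := by
  simp [weight]

@[simp]
theorem weight_concat {u v w : ℤ × ℤ} (p : (gridGraph G).Walk u v) (h : (gridGraph G).Adj v w) :
    weight M (p.concat h) = weight M p + (1 + (v.2 - M).toNat) := by
  simp [weight]

theorem weight_rotate {u v : ℤ × ℤ} (p : (gridGraph G).Walk u u) (hv : v ∈ p.support) :
    weight M (p.rotate v hv) = weight M p :=
  ((p.rotate_darts v hv).perm.map _).sum_eq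

theorem exists_eq_cons_concat {V : Type*} {Γ : SimpleGraph V} {v : V} (p : Γ.Walk v v)
    (hp : ¬ p.Nil) : ∃ (a b : V) (hva : Γ.Adj v a) (q : Γ.Walk a b) (hbv : Γ.Adj b v),
      p = (q.concat hbv).cons hva := by
  obtain ⟨a, hva, r, rfl⟩ := SimpleGraph.Walk.not_nil_iff.1 hp
  cases r with
  | nil => exact absurd hva Γ.irrefl
  | cons h r =>
    obtain ⟨b, q, hbv, hq⟩ := SimpleGraph.Walk.exists_cons_eq_concat h r
    exact ⟨a, b, hva, q, hbv, by rw [hq]⟩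

/-- `w` lies below `v`, or level with `v` and not to its right. -/
def IsLexBelow (w v : ℤ × ℤ) : Prop := w.2 < v.2 ∨ w.2 = v.2 ∧ w.1 ≤ v.1

theorem exists_mem_support_forall_isLexBelow {u v : ℤ × ℤ} (p : (gridGraph G).Walk u v) :
    ∃ t ∈ p.support, ∀ w ∈ p.support, IsLexBelow w t := by
  obtain ⟨t, ht, hmax⟩ := p.support.toFinset.exists_max_image (fun w => toLex (w.2, w.1))
    ⟨u, List.mem_toFinset.2 p.start_mem_support⟩
  exact ⟨t, List.mem_toFinset.1 ht, fun w hw =>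
    Prod.Lex.le_iff.1 (hmax w (List.mem_toFinset.2 hw))⟩

theorem eq_left_or_eq_below {v a : ℤ × ℤ} (hva : (gridGraph G).Adj v a) (ha : IsLexBelow a v) :
    a = (v.1 - 1, v.2) ∨ a = (v.1, v.2 - 1) := by
  have h := hva.1
  simp only [IsLexBelow, Prod.ext_iff] at ha ⊢
  omega

theorem winding_corner_ne_zero {v a b : ℤ × ℤ} (hva : (gridGraph G).Adj v a)
    (q : (gridGraph G).Walk a b) (hbv : (gridGraph G).Adj b v) (hab : a ≠ b)
    (hvq : v ∉ q.support) (hmax : ∀ w ∈ q.support, IsLexBelow w v) :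
    winding (v.1 - 1, v.2 - 1) ((q.concat hbv).cons hva) ≠ 0 := by
  have hq : winding (v.1 - 1, v.2 - 1) q = 0 := by
    refine List.sum_eq_zero fun c hc => ?_
    obtain ⟨d, hd, rfl⟩ := List.mem_map.1 hc
    have h_ne_fst : d.fst ≠ v := ne_of_mem_of_not_mem (q.dart_fst_mem_support_of_mem_darts hd) hvq
    have h_ne_snd : d.snd ≠ v := ne_of_mem_of_not_mem (q.dart_snd_mem_support_of_mem_darts hd) hvq
    have h_fst := hmax _ (q.dart_fst_mem_support_of_mem_darts hd)
    have h_snd := hmax _ (q.dart_snd_mem_support_of_mem_darts hd)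
    have hadj := d.adj.1
    simp only [IsLexBelow, ne_eq, Prod.ext_iff] at h_ne_fst h_ne_snd h_fst h_snd
    simp only [crossing]
    split_ifs <;> omega
  have ha := eq_left_or_eq_below hva (hmax a q.start_mem_support)
  have hb := eq_left_or_eq_below hbv.symm (hmax b q.end_mem_support)
  have h_eq : winding (v.1 - 1, v.2 - 1) ((q.concat hbv).cons hva) =
      crossing (v.1 - 1, v.2 - 1) v a + crossing (v.1 - 1, v.2 - 1) b v := by
    rw [winding] at hq
    simp [winding, hq]
  rw [h_eq]
  obtain ⟨rfl, rfl⟩ | ⟨rfl, rfl⟩ : a = (v.1 - 1, v.2) ∧ b = (v.1, v.2 - 1) ∨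
      a = (v.1, v.2 - 1) ∧ b = (v.1 - 1, v.2) := by grind
  all_goals simp [crossing]

theorem exists_flip_corner (hG : IsHoleFree G) (he : IsLocalCocycle G e) {v a b : ℤ × ℤ}
    (hva : (gridGraph G).Adj v a) (q : (gridGraph G).Walk a b) (hbv : (gridGraph G).Adj b v)
    (hab : a ≠ b) (hvq : v ∉ q.support) (hmax : ∀ w ∈ q.support, IsLexBelow w v) :
    ∃ v', (gridGraph G).Adj v' a ∧ (gridGraph G).Adj b v' ∧
      v'.2 = v.2 - 1 ∧ (v'.2 = a.2 ∨ v'.2 = b.2) ∧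
      e (gridPoint b) (gridPoint v) * e (gridPoint v) (gridPoint a) =
        e (gridPoint b) (gridPoint v') * e (gridPoint v') (gridPoint a) := by
  have hsq : unitSquare (v.1 - 1, v.2 - 1) ⊆ G :=
    hG.unitSquare_subset _ (winding_corner_ne_zero hva q hbv hab hvq hmax)
  have ha := eq_left_or_eq_below hva (hmax a q.start_mem_support)
  have hb := eq_left_or_eq_below hbv.symm (hmax b q.end_mem_support)
  have hconv := convex_unitSquare (v.1 - 1, v.2 - 1)
  have hv_mem : gridPoint v ∈ unitSquare (v.1 - 1, v.2 - 1) := by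
    apply gridPoint_mem_unitSquare <;> grind
  have ha_mem : gridPoint a ∈ unitSquare (v.1 - 1, v.2 - 1) := by
    apply gridPoint_mem_unitSquare <;> grind
  have hb_mem : gridPoint b ∈ unitSquare (v.1 - 1, v.2 - 1) := by
    apply gridPoint_mem_unitSquare <;> grind
  have hv'_mem : gridPoint (v.1 - 1, v.2 - 1) ∈ unitSquare (v.1 - 1, v.2 - 1) := by
    apply gridPoint_mem_unitSquare <;> grind
  refine ⟨(v.1 - 1, v.2 - 1), ⟨by grind, (hconv.segment_subset hv'_mem ha_mem).trans hsq⟩,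
    ⟨by grind, (hconv.segment_subset hb_mem hv'_mem).trans hsq⟩, rfl, by grind, ?_⟩
  rw [he _ hsq hconv _ hb_mem _ hv_mem _ ha_mem, he _ hsq hconv _ hb_mem _ hv'_mem _ ha_mem]

theorem IsHoleFree.holonomy_eq_one_of_isLexBelow (hG : IsHoleFree G) (he : IsLocalCocycle G e)
    {v : ℤ × ℤ} (p : (gridGraph G).Walk v v) (hM : ∀ w ∈ p.support, M ≤ w.2)
    (hmax : ∀ w ∈ p.support, IsLexBelow w v)
    (ih : ∀ {u : ℤ × ℤ} (r : (gridGraph G).Walk u u), (∀ w ∈ r.support, M ≤ w.2) →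
      weight M r < weight M p → holonomy e r = 1) :
    holonomy e p = 1 := by
  by_cases hp : p.Nil
  · rw [hp.eq_nil, holonomy_nil]
  obtain ⟨a, b, hva, q, hbv, rfl⟩ := exists_eq_cons_concat p hp
  simp only [SimpleGraph.Walk.support_cons, SimpleGraph.Walk.support_concat, List.mem_cons,
    List.mem_append, forall_eq_or_imp, List.not_mem_nil, or_false] at hM hmax
  simp only [weight_cons, weight_concat] at ih
  have hMv : M ≤ v.2 := hM.1
  have hMq : ∀ w ∈ q.support, M ≤ w.2 := fun w hw => hM.2 w (.inl hw)
  have hmaxq : ∀ w ∈ q.support, IsLexBelow w v := fun w hw => hmax.2 w (.inl hw)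
  by_cases hvq : v ∈ q.support
  · obtain ⟨q₁, q₂, rfl⟩ := SimpleGraph.Walk.mem_support_iff_exists_append.1 hvq
    simp only [SimpleGraph.Walk.mem_support_append_iff] at hMq
    have h₁ : holonomy e (q₁.cons hva) = 1 :=
      ih _ (by grind [SimpleGraph.Walk.support_cons]) (by grind [weight_cons, weight_append])
    have h₂ : holonomy e (q₂.concat hbv) = 1 :=
      ih _ (by grind [SimpleGraph.Walk.support_concat]) (by grind [weight_concat, weight_append])
    rw [← SimpleGraph.Walk.append_concat, ← SimpleGraph.Walk.cons_append, holonomy_append, h₁, h₂,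
      mul_one]
  obtain rfl | hab := eq_or_ne a b
  · have hq : holonomy e q = 1 := ih q hMq (by omega)
    rw [holonomy_cons, holonomy_concat, hq, one_mul, he.mul_swap hva.2]
  · obtain ⟨v', hva', hbv', hv', hv'_level, h_flip⟩ :=
      exists_flip_corner hG he hva q hbv hab hvq hmaxq
    have hMv' : M ≤ v'.2 := by
      have := hMq a q.start_mem_support
      have := hMq b q.end_mem_support
      omega
    have h : holonomy e ((q.concat hbv').cons hva') = 1 :=
      ih _ (by grind [SimpleGraph.Walk.support_cons, SimpleGraph.Walk.support_concat])
        (by grind [weight_cons, weight_concat])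
    rw [holonomy_cons, holonomy_concat, mul_eq_one_comm, mul_assoc] at h ⊢
    rw [h_flip, h]

theorem IsHoleFree.holonomy_eq_one (hG : IsHoleFree G) (he : IsLocalCocycle G e)
    {u : ℤ × ℤ} (p : (gridGraph G).Walk u u) : holonomy e p = 1 := by
  obtain ⟨M, hM⟩ : ∃ M, ∀ w ∈ p.support, M ≤ w.2 :=
    let ⟨m, hm⟩ := p.support.finite_toSet.bddBelow
    ⟨m.2, fun _ hw => (hm hw).2⟩
  induction hn : weight M p using Nat.strong_induction_on generalizing u with | _ n ih
  subst hn
  obtain ⟨v, hv, hmax⟩ := exists_mem_support_forall_isLexBelow p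
  rw [← holonomy_rotate_eq_one_iff p hv]
  refine hG.holonomy_eq_one_of_isLexBelow he (p.rotate v hv) (M := M) ?_ ?_ ?_
  · simpa only [p.mem_support_rotate_iff] using hM
  · simpa only [p.mem_support_rotate_iff] using hmax
  · rw [weight_rotate]
    exact fun r hr hlt => ih _ hlt r hr rfl

end Holonomy

/-! ### Closed curves -/

section ClosedCurve

variable {H : Type*} [Group H] {G : Set ℂ} {e : ℂ → ℂ → H}

theorem floor_adjacent_of_abs_sub_lt_one {a b : ℝ} (h : |a - b| < 1) :
    ⌊b⌋ = ⌊a⌋ ∨ ⌊b⌋ = ⌊a⌋ + 1 ∨ ⌊a⌋ = ⌊b⌋ + 1 := by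
  obtain ⟨h₁, h₂⟩ := abs_lt.1 h
  have hab : ⌊a⌋ ≤ ⌊b⌋ + 1 := by
    rw [← Int.floor_add_one]
    exact Int.floor_mono (by linarith)
  have hba : ⌊b⌋ ≤ ⌊a⌋ + 1 := by
    rw [← Int.floor_add_one]
    exact Int.floor_mono (by linarith)
  omega

theorem gridPoint_floor_mem_ball {z w w' : ℂ} (hw : dist z w < 1) (hw' : dist z w' < 1) :
    gridPoint (⌊w.re⌋, ⌊w'.im⌋) ∈ ball z 4 := by
  have hre : |z.re - w.re| < 1 := (Complex.abs_re_le_norm (z - w)).trans_lt (dist_eq_norm z w ▸ hw)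
  have him : |z.im - w'.im| < 1 :=
    (Complex.abs_im_le_norm (z - w')).trans_lt (dist_eq_norm z w' ▸ hw')
  rw [abs_lt] at hre him
  have hre_floor : |(⌊w.re⌋ : ℝ) - z.re| < 2 := by
    rw [abs_lt]
    constructor <;> linarith [Int.floor_le w.re, Int.lt_floor_add_one w.re]
  have him_floor : |(⌊w'.im⌋ : ℝ) - z.im| < 2 := by
    rw [abs_lt]
    constructor <;> linarith [Int.floor_le w'.im, Int.lt_floor_add_one w'.im]
  rw [mem_ball, dist_eq_norm]
  refine (Complex.norm_le_abs_re_add_abs_im _).trans_lt ?_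
  simp only [gridPoint, Complex.sub_re, Complex.sub_im]
  linarith

theorem IsLocalCocycle.exists_walk_holonomy_eq_of_horizontal (he : IsLocalCocycle G e)
    {K : Set ℂ} (hKG : K ⊆ G) (hK : Convex ℝ K) {i k j : ℤ} (hik : k = i ∨ k = i + 1 ∨ i = k + 1)
    (hi : gridPoint (i, j) ∈ K) (hk : gridPoint (k, j) ∈ K) :
    ∃ p : (gridGraph G).Walk (i, j) (k, j),
      holonomy e p = e (gridPoint (i, j)) (gridPoint (k, j)) := by
  obtain rfl | hik := hik
  · exact ⟨.nil, (he.self (hKG hi)).symm⟩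
  · have hadj : (gridGraph G).Adj (i, j) (k, j) :=
      ⟨.inl ⟨rfl, hik⟩, (hK.segment_subset hi hk).trans hKG⟩
    exact ⟨hadj.toWalk, mul_one _⟩

theorem IsLocalCocycle.exists_walk_holonomy_eq_of_vertical (he : IsLocalCocycle G e)
    {K : Set ℂ} (hKG : K ⊆ G) (hK : Convex ℝ K) {i j l : ℤ} (hjl : l = j ∨ l = j + 1 ∨ j = l + 1)
    (hj : gridPoint (i, j) ∈ K) (hl : gridPoint (i, l) ∈ K) :
    ∃ p : (gridGraph G).Walk (i, j) (i, l),
      holonomy e p = e (gridPoint (i, j)) (gridPoint (i, l)) := by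
  obtain rfl | hjl := hjl
  · exact ⟨.nil, (he.self (hKG hj)).symm⟩
  · have hadj : (gridGraph G).Adj (i, j) (i, l) :=
      ⟨.inr ⟨rfl, hjl⟩, (hK.segment_subset hj hl).trans hKG⟩
    exact ⟨hadj.toWalk, mul_one _⟩

theorem IsLocalCocycle.exists_walk_floorPoint (he : IsLocalCocycle G e) {z w : ℂ}
    (hz : ball z 4 ⊆ G) (hzw : dist z w < 1) :
    ∃ p : (gridGraph G).Walk (floorPoint z) (floorPoint w),
      holonomy e p = e (gridPoint (floorPoint z)) (gridPoint (floorPoint w)) := by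
  have hzz : dist z z < 1 := by simp
  have hball := convex_ball z 4
  have hnorm : ‖z - w‖ < 1 := dist_eq_norm z w ▸ hzw
  have h₀ := gridPoint_floor_mem_ball hzz hzz
  have h₁ := gridPoint_floor_mem_ball hzw hzz
  have h₂ := gridPoint_floor_mem_ball hzw hzw
  obtain ⟨p, hp⟩ := he.exists_walk_holonomy_eq_of_horizontal hz hball
    (floor_adjacent_of_abs_sub_lt_one ((Complex.abs_re_le_norm (z - w)).trans_lt hnorm)) h₀ h₁
  obtain ⟨q, hq⟩ := he.exists_walk_holonomy_eq_of_vertical hz hball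
    (floor_adjacent_of_abs_sub_lt_one ((Complex.abs_im_le_norm (z - w)).trans_lt hnorm)) h₁ h₂
  refine ⟨p.append q, (holonomy_append p q).trans ?_⟩
  rw [hp, hq]
  exact he _ hz hball _ h₀ _ h₁ _ h₂

theorem IsLocalCocycle.exists_walk_of_chain (he : IsLocalCocycle G e) {z : ℕ → ℂ} {f : ℕ → H}
    (hball : ∀ i, ball (z i) 4 ⊆ G) (hdist : ∀ i, dist (z i) (z (i + 1)) < 1)
    (hf : ∀ i, f (i + 1) = f i * e (z i) (z (i + 1))) (n : ℕ) :
    ∃ p : (gridGraph G).Walk (floorPoint (z 0)) (floorPoint (z n)),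
      f n * e (z n) (gridPoint (floorPoint (z n))) =
        f 0 * e (z 0) (gridPoint (floorPoint (z 0))) * holonomy e p := by
  induction n with
  | zero => exact ⟨.nil, (mul_one _).symm⟩
  | succ n ih =>
    obtain ⟨p, hp⟩ := ih
    obtain ⟨q, hq⟩ := he.exists_walk_floorPoint (hball n) (hdist n)
    have hzz : dist (z n) (z n) < 1 := by simp
    have h_mem : z n ∈ ball (z n) 4 := mem_ball_self four_pos
    have h_succ_mem : z (n + 1) ∈ ball (z n) 4 := by
      rw [mem_ball']
      linarith [hdist n]
    have h_floor_mem : gridPoint (floorPoint (z n)) ∈ ball (z n) 4 :=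
      gridPoint_floor_mem_ball hzz hzz
    have h_floor_succ_mem : gridPoint (floorPoint (z (n + 1))) ∈ ball (z n) 4 :=
      gridPoint_floor_mem_ball (hdist n) (hdist n)
    have hconv := convex_ball (z n) 4
    refine ⟨p.append q, ?_⟩
    rw [holonomy_append, ← mul_assoc, ← hp, hq, hf, mul_assoc, mul_assoc,
      he _ (hball n) hconv _ h_mem _ h_succ_mem _ h_floor_succ_mem,
      he _ (hball n) hconv _ h_mem _ h_floor_mem _ h_floor_succ_mem]

theorem IsHoleFree.eq_of_closed_unit_chain (hG : IsHoleFree G) (he : IsLocalCocycle G e)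
    {z : ℕ → ℂ} {f : ℕ → H} (hball : ∀ i, ball (z i) 4 ⊆ G)
    (hdist : ∀ i, dist (z i) (z (i + 1)) < 1) (hf : ∀ i, f (i + 1) = f i * e (z i) (z (i + 1)))
    {n : ℕ} (hn : z n = z 0) : f n = f 0 := by
  have h := he.exists_walk_of_chain hball hdist hf n
  rw [hn] at h
  obtain ⟨p, hp⟩ := h
  rwa [hG.holonomy_eq_one he p, mul_one, mul_left_inj] at hp

theorem IsHoleFree.eq_of_closed_chain (hG : IsHoleFree G) (he : IsLocalCocycle G e) {δ : ℝ}
    (hδ : 0 < δ) {z : ℕ → ℂ} {f : ℕ → H} (hball : ∀ i, ball (z i) (4 * δ) ⊆ G)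
    (hdist : ∀ i, dist (z i) (z (i + 1)) < δ) (hf : ∀ i, f (i + 1) = f i * e (z i) (z (i + 1)))
    {n : ℕ} (hn : z n = z 0) : f n = f 0 := by
  have hG_scaled : IsHoleFree ((δ • ·) ⁻¹' G : Set ℂ) :=
    hG.preimage_homeomorph (Homeomorph.smulOfNeZero δ hδ.ne') fun A hA => hA.smul₀ δ
  have he_scaled : IsLocalCocycle ((δ • ·) ⁻¹' G) fun x y : ℂ => e (δ • x) (δ • y) :=
    he.comp_linearMap (LinearMap.lsmul ℝ ℂ δ)
  have dist_inv_smul (x y : ℂ) : dist (δ⁻¹ • x) y = δ⁻¹ * dist x (δ • y) := by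
    rw [← inv_smul_smul₀ hδ.ne' y, dist_smul₀, norm_inv, Real.norm_of_nonneg hδ.le,
      inv_smul_smul₀ hδ.ne']
  refine hG_scaled.eq_of_closed_unit_chain he_scaled (z := fun i => δ⁻¹ • z i)
    (fun i w hw => hball i ?_) (fun i => ?_) (fun i => ?_) (congrArg (δ⁻¹ • ·) hn)
  · rwa [mem_ball', dist_inv_smul, inv_mul_lt_iff₀ hδ, mul_comm, ← mem_ball'] at hw
  · rw [dist_inv_smul, smul_inv_smul₀ hδ.ne', inv_mul_lt_iff₀ hδ, mul_one]
    exact hdist i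
  · simpa only [smul_inv_smul₀ hδ.ne'] using hf i

theorem IsHoleFree.eq_of_closed_curve (hG : IsHoleFree G) (hGo : IsOpen G)
    (he : IsLocalCocycle G e) {γ : unitInterval → ℂ} (hγ : Continuous γ) (hγG : ∀ t, γ t ∈ G)
    {F : unitInterval → H}
    (hF : ∀ K ⊆ G, Convex ℝ K → ∀ s t, s ≤ t → γ '' Icc s t ⊆ K → F t = F s * e (γ s) (γ t))
    (h_closed : γ 1 = γ 0) : F 1 = F 0 := by
  obtain ⟨r, hr, hrG⟩ := (isCompact_range hγ).exists_thickening_subset_open hGo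
    (range_subset_iff.2 hγG)
  have hball (t : unitInterval) : ball (γ t) r ⊆ G :=
    (ball_subset_thickening (mem_range_self t) r).trans hrG
  obtain ⟨t, ht_zero, ht_mono, ⟨n, hn⟩, ht⟩ :=
    exists_monotone_Icc_subset_open_cover_unitInterval
      (c := fun x => γ ⁻¹' ball (γ x) (r / 8)) (fun _ => isOpen_ball.preimage hγ)
      fun x _ => mem_iUnion.2 ⟨x, mem_ball_self (by positivity)⟩
  have ht_le (i : ℕ) : t i ≤ t (i + 1) := ht_mono i.le_succ
  have h_chain := hG.eq_of_closed_chain he (δ := r / 4) (by positivity) (z := γ ∘ t) (f := F ∘ t)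
    (fun i => ?_) (fun i => ?_) (fun i => ?_) (n := n) ?_
  · rwa [Function.comp_apply, Function.comp_apply, hn n le_rfl, ht_zero] at h_chain
  · rw [mul_div_cancel₀ r four_ne_zero]
    exact hball (t i)
  · obtain ⟨x, hx⟩ := ht i
    refine (dist_triangle_right (γ (t i)) (γ (t (i + 1))) (γ x)).trans_lt ?_
    linarith [mem_ball.1 (hx (left_mem_Icc.2 (ht_le i))),
      mem_ball.1 (hx (right_mem_Icc.2 (ht_le i)))]
  · obtain ⟨x, hx⟩ := ht i
    exact hF _ ((ball_subset_ball (by linarith)).trans (hball x)) (convex_ball _ _) _ _ (ht_le i)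
      (image_subset_iff.2 hx)
  · rw [Function.comp_apply, Function.comp_apply, hn n le_rfl, ht_zero, h_closed]

end ClosedCurve

/-! ### The fundamental group of an open set without bounded holes -/

section PathClass

open CategoryTheory

variable {X : Type*} [TopologicalSpace X]

/-- The class of a path in the fundamental groupoid. -/
def groupoidHom {x y : X} (p : Path x y) : FundamentalGroupoid.mk x ⟶ FundamentalGroupoid.mk y :=
  FundamentalGroupoid.fromPath (.mk p)

theorem groupoidHom_trans {x y z : X} (p : Path x y) (q : Path y z) :
    groupoidHom (p.trans q) = groupoidHom p ≫ groupoidHom q :=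
  rfl

variable [PathConnectedSpace X] (x₀ : X)

/-- The class in the fundamental group at `x₀` of a path closed up by the chosen paths from `x₀` to
its endpoints, inverted because a product `a * b` in `FundamentalGroup` traverses `b` first; this
makes `pathClass` multiplicative. -/
noncomputable def pathClass {x y : X} (p : Path x y) : FundamentalGroup X x₀ :=
  (groupoidHom (PathConnectedSpace.somePath x₀ x) ≫ groupoidHom p ≫
    inv (groupoidHom (PathConnectedSpace.somePath x₀ y)))⁻¹

variable {x₀}

theorem pathClass_eq_iff {x y : X} {p q : Path x y} :
    pathClass x₀ p = pathClass x₀ q ↔ p.Homotopic q := by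
  rw [pathClass, pathClass, inv_inj, cancel_epi, cancel_mono]
  exact Path.Homotopic.Quotient.eq

theorem pathClass_refl (x : X) : pathClass x₀ (Path.refl x) = 1 := by
  have h_id : groupoidHom (Path.refl x) = 𝟙 _ := rfl
  rw [pathClass, h_id, Category.id_comp, IsIso.hom_inv_id]
  exact inv_one

theorem pathClass_trans {x y z : X} (p : Path x y) (q : Path y z) :
    pathClass x₀ (p.trans q) = pathClass x₀ p * pathClass x₀ q := by
  rw [pathClass, pathClass, pathClass, ← mul_inv_rev, End.mul_def, groupoidHom_trans]
  simp only [Category.assoc, IsIso.inv_hom_id_assoc]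

theorem pathClass_cast {x y x' y' : X} (p : Path x y) (hx : x' = x) (hy : y' = y) :
    pathClass x₀ (p.cast hx hy) = pathClass x₀ p := by
  subst hx hy
  rfl

theorem pathClass_subpath_mul {x y : X} (γ : Path x y) (r s t : unitInterval) :
    pathClass x₀ (γ.subpath r s) * pathClass x₀ (γ.subpath s t) =
      pathClass x₀ (γ.subpath r t) := by
  rw [← pathClass_trans, pathClass_eq_iff]
  exact ⟨Path.Homotopy.subpathTransSubpath γ r s t⟩

end PathClass

/-- A path with values in `K`, as a path of the subspace `K`. -/
def codRestrictPath {X : Type*} [TopologicalSpace X] {K : Set X} {x y : X} (p : Path x y)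
    (hp : ∀ t, p t ∈ K) :
    Path (⟨x, p.source ▸ hp 0⟩ : K) ⟨y, p.target ▸ hp 1⟩ where
  toFun t := ⟨p t, hp t⟩
  source' := Subtype.ext p.source
  target' := Subtype.ext p.target

section SegmentLoop

variable {V : Type*} [AddCommGroup V] [Module ℝ V] [TopologicalSpace V] [ContinuousAdd V]
  [ContinuousSMul ℝ V] {G K : Set V}

theorem homotopic_of_convex (hK : Convex ℝ K) (hKG : K ⊆ G) {x y : G} {p q : Path x y}
    (hp : ∀ t, (p t : V) ∈ K) (hq : ∀ t, (q t : V) ∈ K) : p.Homotopic q := by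
  have := hK.contractibleSpace ⟨_, hp 0⟩
  exact (SimplyConnectedSpace.paths_homotopic
    (codRestrictPath (p.map continuous_subtype_val) hp)
    (codRestrictPath (q.map continuous_subtype_val) hq)).map
      ⟨inclusion hKG, continuous_inclusion hKG⟩

theorem pathSegment_mem_segment (x y : V) (t : unitInterval) :
    Path.segment x y t ∈ segment ℝ x y :=
  Path.range_segment x y ▸ mem_range_self t

variable [PathConnectedSpace G] (x₀ : G)

/-- The class of the segment from `x` to `y` in the fundamental group of `G`, with the junk value
`1` if the segment leaves `G`. -/
noncomputable def segmentClass (x y : V) : FundamentalGroup G x₀ :=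
  if h : segment ℝ x y ⊆ G then
    pathClass x₀ (codRestrictPath (Path.segment x y) fun t => h (pathSegment_mem_segment x y t))
  else 1

variable {x₀}

theorem segmentClass_eq_pathClass (hK : Convex ℝ K) (hKG : K ⊆ G) {x y : G} (p : Path x y)
    (hp : ∀ t, (p t : V) ∈ K) : segmentClass x₀ (x : V) y = pathClass x₀ p := by
  have hx : (x : V) ∈ K := by simpa only [p.source] using hp 0
  have hy : (y : V) ∈ K := by simpa only [p.target] using hp 1
  have hxy := hK.segment_subset hx hy
  rw [segmentClass, dif_pos (hxy.trans hKG), pathClass_eq_iff]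
  exact homotopic_of_convex hK hKG (fun t => hxy (pathSegment_mem_segment (x : V) y t)) hp

theorem isLocalCocycle_segmentClass : IsLocalCocycle G (segmentClass x₀) := by
  intro K hKG hK x hx y hy z hz
  have exists_path {a b : V} (ha : a ∈ K) (hb : b ∈ K) :
      ∃ p : Path (⟨a, hKG ha⟩ : G) ⟨b, hKG hb⟩, ∀ t, (p t : V) ∈ K := by
    have h (t) : Path.segment a b t ∈ K :=
      hK.segment_subset ha hb (pathSegment_mem_segment a b t)
    exact ⟨codRestrictPath _ fun t => hKG (h t), h⟩
  obtain ⟨p, hp⟩ := exists_path hx hy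
  obtain ⟨q, hq⟩ := exists_path hy hz
  have hpq (t) : (p.trans q t : V) ∈ K := by
    rw [Path.trans_apply]
    split_ifs
    exacts [hp _, hq _]
  have h := pathClass_trans (x₀ := x₀) p q
  rw [← segmentClass_eq_pathClass hK hKG p hp, ← segmentClass_eq_pathClass hK hKG q hq,
    ← segmentClass_eq_pathClass hK hKG (p.trans q) hpq] at h
  exact h.symm

end SegmentLoop

theorem IsHoleFree.simplyConnectedSpace {G : Set ℂ} (hG : IsHoleFree G) (hGo : IsOpen G)
    [PathConnectedSpace G] : SimplyConnectedSpace G := by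
  refine simply_connected_iff_loops_nullhomotopic.2 ⟨inferInstance, fun x γ => ?_⟩
  have h_eq : pathClass x (γ.subpath 0 1) = pathClass x (γ.subpath 0 0) := by
    refine hG.eq_of_closed_curve hGo (isLocalCocycle_segmentClass (x₀ := x))
      (γ := fun t => (γ t : ℂ)) (F := fun t => pathClass x (γ.subpath 0 t))
      (by fun_prop) (fun t => (γ t).2) (fun K hKG hK s t hst hγK => ?_)
      (by rw [γ.source, γ.target])
    have h_mem (u) : (γ.subpath s t u : ℂ) ∈ K := by
      have hu : γ.subpath s t u ∈ γ '' Icc s t :=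
        Path.range_subpath_of_le γ s t hst ▸ mem_range_self u
      exact hγK (image_image Subtype.val γ _ ▸ mem_image_of_mem Subtype.val hu)
    rw [segmentClass_eq_pathClass hK hKG _ h_mem, pathClass_subpath_mul]
  rw [Path.subpath_zero_one, Path.subpath_self, pathClass_cast, pathClass_refl,
    ← pathClass_refl x] at h_eq
  exact pathClass_eq_iff.1 h_eq

theorem components_of_interior_simply_connected_general (E E₀ : Set ℂ)
    (hE₀sub : E₀ ⊆ (outerDomain E)ᶜ) (hsep : SeparatedNhds E₀ ((outerDomain E)ᶜ \ E₀)) :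
    ∀ z ∈ interior E₀, SimplyConnectedSpace (connectedComponentIn (interior E₀) z) := by
  intro z hz
  have h_open : IsOpen (connectedComponentIn (interior E₀) z) :=
    isOpen_interior.connectedComponentIn
  have : PathConnectedSpace (connectedComponentIn (interior E₀) z) :=
    isPathConnected_iff_pathConnectedSpace.1
      (h_open.isConnected_iff_isPathConnected.1 (isConnected_connectedComponentIn_iff.2 hz))
  have h_holeFree : IsHoleFree E₀ := (isHoleFree_compl_outerDomain E).of_separatedNhds hE₀sub hsep
  exact (h_holeFree.interior.connectedComponentIn isOpen_interior z).simplyConnectedSpace h_open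

/-- **Remark after Theorem 2.1.** Let `E ⊂ ℂ` be compact, `Ω` the unbounded component of the
complement and `𝓔 = ℂ̄ ∖ Ω`. If `E₀ ⊆ 𝓔` is closed with `dist(E₀, 𝓔 ∖ E₀) > 0`, then every
connected component of `int E₀` is simply connected. -/
theorem components_of_interior_simply_connected
    (E : Set ℂ) (hE : IsCompact E)
    (E₀ : Set ℂ) (hE₀closed : IsClosed E₀) (hE₀sub : E₀ ⊆ (outerDomain E)ᶜ)
    (hdist : ∃ d > 0, ∀ a ∈ E₀, ∀ b ∈ (outerDomain E)ᶜ \ E₀, d ≤ dist a b) :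
    ∀ z ∈ interior E₀, SimplyConnectedSpace (connectedComponentIn (interior E₀) z) := by
  obtain ⟨d, hd, h⟩ := hdist
  exact components_of_interior_simply_connected_general E E₀ hE₀sub
    (separatedNhds_of_forall_le_dist hd h)
end
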